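/- Let I ⊆ {1,…,s} and Σ a finite set of zero-nonzero conditions on I. Then the square matrix Mat(Ada(Σ), Σ), with rows indexed by Ada(Σ) and columns indexed by Σ and (J,σ) entry σ^J, is invertible (over the rationals). -/

import Mathlib

open Classical in
/-- Restriction (extension by zero) of a zero-nonzero condition to the index set `I`. -/
noncomputable def zres (I : Finset ℕ) (σ : ℕ → Fin 2) : ℕ → Fin 2 :=
  fun j => if j ∈ I then σ j else 0

open Classical in
/-- The adapted family `Ada(Σ)` of a finite set `Σ` of zero-nonzero conditions on `I`
(encoded as maps `ℕ → Fin 2` vanishing outside `I`), defined by recursion on `card I`: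
if `I = ∅` then `Ada(∅) = ∅` and `Ada({σ_∅}) = {∅}`; otherwise, with `i = max I`,
`I' = I \ {i}`, `Ξ` the set of restrictions of elements of `Σ` to `I'`, and `Ξ'` the set
of elements of `Ξ` having two different extensions in `Σ`,
`Ada(Σ) = Ada(Ξ) ∪ {J ∪ {i} : J ∈ Ada(Ξ')}`. -/
noncomputable def Ada (I : Finset ℕ) (S : Finset (ℕ → Fin 2)) : Finset (Finset ℕ) :=
  if hI : I.Nonempty then
    let i := I.max' hI
    let I' := I.erase i
    let Xi : Finset (ℕ → Fin 2) := S.image (zres I')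
    let Xi' : Finset (ℕ → Fin 2) :=
      Xi.filter (fun ξ => 1 < (S.filter (fun σ => zres I' σ = ξ)).card)
    Ada I' Xi ∪ (Ada I' Xi').image (insert i)
  else if S = ∅ then ∅ else {∅}
termination_by I.card
decreasing_by
  all_goals exact Finset.card_erase_lt_of_mem (I.max'_mem hI)

/-!
Every function on `Σ` is a combination of the monomials `σ ↦ σ^J`, `J ∈ Ada(Σ)`: writing it as
`P + σ(i) Q`, with `P` and `Q` independent of the last coordinate `σ(i)`, only the values of `Q`
on `Ξ'` are constrained, and there they are the differences between the two extensions; once such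
a `Q` has been chosen, the values of `P` on `Ξ` are determined. So `Mat(Ada(Σ), Σ)` has a left
inverse over any commutative ring, and since `card Ada(Σ) ≤ card Σ` by counting the fibres of
`Σ → Ξ`, the inverse is two-sided.
-/

theorem card_image_add_card_filter_one_lt_card_le {α β : Type*} [DecidableEq β] (f : α → β)
    (s : Finset α) :
    (s.image f).card + {b ∈ s.image f | 1 < {a ∈ s | f a = b}.card}.card ≤ s.card := by
  rw [Finset.card_eq_sum_card_image f s, Finset.card_filter, Finset.card_eq_sum_ones,
    ← Finset.sum_add_distrib]
  refine Finset.sum_le_sum fun b hb => ?_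
  have fiber_pos : 0 < {a ∈ s | f a = b}.card :=
    Finset.card_pos.2 (Finset.fiber_nonempty_iff_mem_image.2 hb)
  split_ifs <;> omega

section AdaptedFamily

variable {I : Finset ℕ} {S : Finset (ℕ → Fin 2)} {a : ℕ}

open Classical in
/-- The set `Ξ'` of restrictions to `I` of elements of `S` that have two different extensions
in `S`. -/
noncomputable def doublyExtended (I : Finset ℕ) (S : Finset (ℕ → Fin 2)) :
    Finset (ℕ → Fin 2) :=
  {ξ ∈ S.image (zres I) | 1 < {σ ∈ S | zres I σ = ξ}.card}

theorem mem_doublyExtended_of_ne {σ τ : ℕ → Fin 2} (hσ : σ ∈ S) (hτ : τ ∈ S) (hne : σ ≠ τ)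
    (hres : zres I σ = zres I τ) : zres I σ ∈ doublyExtended I S := by
  classical
  refine Finset.mem_filter.2 ⟨Finset.mem_image_of_mem _ hσ, Finset.one_lt_card.2 ?_⟩
  exact ⟨σ, by simp [hσ], τ, by simp [hτ, hres], hne⟩

theorem zres_eq_zero_of_notMem (σ : ℕ → Fin 2) {j : ℕ} (hj : j ∉ I) : zres I σ j = 0 :=
  if_neg hj

theorem zres_zres (I : Finset ℕ) (σ : ℕ → Fin 2) : zres I (zres I σ) = zres I σ := by
  funext j
  simp only [zres]
  split_ifs <;> rfl

theorem eq_zero_of_mem_image_zres [DecidableEq (ℕ → Fin 2)] :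
    ∀ ξ ∈ S.image (zres I), ∀ j ∉ I, ξ j = 0 :=
  Finset.forall_mem_image.2 fun σ _ _ => zres_eq_zero_of_notMem σ

theorem eq_zero_of_mem_doublyExtended : ∀ ξ ∈ doublyExtended I S, ∀ j ∉ I, ξ j = 0 := by
  classical
  exact fun ξ hξ => eq_zero_of_mem_image_zres ξ (Finset.mem_filter.1 hξ).1

theorem update_zres_eq_self {σ : ℕ → Fin 2} (hσ : ∀ j ∉ insert a I, σ j = 0) :
    Function.update (zres I σ) a (σ a) = σ := by
  funext j
  by_cases hja : j = a
  · rw [hja, Function.update_self]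
  · rw [Function.update_of_ne hja]
    by_cases hj : j ∈ I
    · exact if_pos hj
    · rw [zres_eq_zero_of_notMem σ hj, hσ j (by simp [hja, hj])]

theorem exists_eq_apply_zres_add_coord_mul {R : Type*} [Ring R] (ha : a ∉ I)
    (hS : ∀ σ ∈ S, ∀ j ∉ insert a I, σ j = 0) {f q : (ℕ → Fin 2) → R}
    (hq : Set.EqOn q (fun ξ => f (Function.update ξ a 1) - f ξ) (doublyExtended I S)) :
    ∃ g : (ℕ → Fin 2) → R,
      ∀ σ ∈ S, f σ = g (zres I σ) + ((σ a : ℕ) : R) * q (zres I σ) := by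
  classical
  -- A condition `ξ` on `I` is its own extension by `0`; if only the extension by `1` lies in `S`,
  -- the term `q ξ` has to be subtracted.
  refine ⟨fun ξ => if ξ ∈ S then f ξ else f (Function.update ξ a 1) - q ξ, fun σ hσ => ?_⟩
  have update_eq := update_zres_eq_self (hS σ hσ)
  have zres_apply : zres I σ a = 0 := zres_eq_zero_of_notMem σ ha
  obtain h0 | h1 : σ a = 0 ∨ σ a = 1 := by omega
  · have zres_eq : zres I σ = σ := by rwa [h0, ← zres_apply, Function.update_eq_self] at update_eq
    simp [zres_eq, hσ, h0]
  · rw [h1] at update_eq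
    by_cases hmem : zres I σ ∈ S
    · have hne : σ ≠ zres I σ := fun h =>
        one_ne_zero (h1.symm.trans ((congrFun h a).trans zres_apply))
      have hqσ := hq (mem_doublyExtended_of_ne hσ hmem hne (zres_zres I σ).symm)
      simp [hmem, h1, hqσ, update_eq]
    · simp [hmem, h1, update_eq]

theorem Ada_empty (S : Finset (ℕ → Fin 2)) [Decidable (S = ∅)] :
    Ada ∅ S = if S = ∅ then ∅ else {∅} := by
  rw [Ada, dif_neg Finset.not_nonempty_empty]
  congr

theorem Ada_insert [DecidableEq (ℕ → Fin 2)] (hI : ∀ i ∈ I, i < a) (S : Finset (ℕ → Fin 2)) :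
    Ada (insert a I) S =
      Ada I (S.image (zres I)) ∪ (Ada I (doublyExtended I S)).image (insert a) := by
  have max_eq : (insert a I).max' (Finset.insert_nonempty a I) = a :=
    (Finset.max'_eq_iff _ _ _).2 ⟨Finset.mem_insert_self a I,
      (Finset.forall_mem_insert _ _ _).2 ⟨le_rfl, fun i hi => (hI i hi).le⟩⟩
  rw [Ada, dif_pos (Finset.insert_nonempty a I)]
  simp only [max_eq, Finset.erase_insert fun ha => (hI a ha).false, doublyExtended]
  congr!

theorem subset_of_mem_Ada {J : Finset ℕ} (hJ : J ∈ Ada I S) : J ⊆ I := by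
  classical
  induction I using Finset.induction_on_max generalizing S J with
  | empty =>
    rw [Ada_empty] at hJ
    split_ifs at hJ <;> simp_all
  | insert a I hI ih =>
    rw [Ada_insert hI, Finset.mem_union, Finset.mem_image] at hJ
    rcases hJ with hJ | ⟨K, hK, rfl⟩
    · exact (ih hJ).trans (Finset.subset_insert a I)
    · exact Finset.insert_subset_insert a (ih hK)

theorem card_Ada_le (I : Finset ℕ) (S : Finset (ℕ → Fin 2)) : (Ada I S).card ≤ S.card := by
  classical
  induction I using Finset.induction_on_max generalizing S with
  | empty =>
    rw [Ada_empty]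
    split_ifs with hS
    · simp
    · exact Finset.card_pos.2 (Finset.nonempty_iff_ne_empty.2 hS)
  | insert a I hI ih =>
    calc (Ada (insert a I) S).card
        ≤ (Ada I (S.image (zres I))).card + (Ada I (doublyExtended I S)).card := by
          rw [Ada_insert hI]
          exact (Finset.card_union_le _ _).trans (Nat.add_le_add_left Finset.card_image_le _)
      _ ≤ (S.image (zres I)).card + (doublyExtended I S).card :=
          Nat.add_le_add (ih _) (ih _)
      _ ≤ S.card := by
          unfold doublyExtended
          convert card_image_add_card_filter_one_lt_card_le (zres I) S

end AdaptedFamily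

section Monomials

variable (R : Type*) [CommSemiring R] {I : Finset ℕ} {S : Finset (ℕ → Fin 2)} {a : ℕ}

/-- The monomial function `σ ↦ σ^J` on zero-nonzero conditions, with values in `R`. -/
def conditionMonomial (J : Finset ℕ) (σ : ℕ → Fin 2) : R :=
  ∏ i ∈ J, ((σ i : ℕ) : R)

/-- The space of functions spanned by the monomials `σ ↦ σ^J` with `J ∈ Ada I S`. -/
def adaptedSpan (I : Finset ℕ) (S : Finset (ℕ → Fin 2)) : Submodule R ((ℕ → Fin 2) → R) :=
  Submodule.span R (conditionMonomial R '' Ada I S)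

/-- The matrix `Mat(A, S)`, whose `(J, σ)` entry is `σ^J`. -/
def conditionMatrix (A : Finset (Finset ℕ)) (S : Finset (ℕ → Fin 2)) :
    Matrix { J // J ∈ A } { σ // σ ∈ S } R :=
  Matrix.of fun J σ => conditionMonomial R J.1 σ.1

variable {R}

theorem conditionMonomial_zres {J : Finset ℕ} (hJ : J ⊆ I) (σ : ℕ → Fin 2) :
    conditionMonomial R J (zres I σ) = conditionMonomial R J σ :=
  Finset.prod_congr rfl fun i hi => by rw [zres, if_pos (hJ hi)]

theorem apply_zres_of_mem_adaptedSpan {p : (ℕ → Fin 2) → R} (hp : p ∈ adaptedSpan R I S)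
    (σ : ℕ → Fin 2) : p (zres I σ) = p σ := by
  have agree_on_monomials : Set.EqOn
      (LinearMap.proj (zres I σ) : ((ℕ → Fin 2) → R) →ₗ[R] R)
      (LinearMap.proj σ : ((ℕ → Fin 2) → R) →ₗ[R] R)
      (conditionMonomial R '' Ada I S) := by
    rintro _ ⟨J, hJ, rfl⟩
    exact conditionMonomial_zres (subset_of_mem_Ada hJ) σ
  exact LinearMap.eqOn_span agree_on_monomials hp

theorem adaptedSpan_image_zres_le [DecidableEq (ℕ → Fin 2)] (hI : ∀ i ∈ I, i < a) :
    adaptedSpan R I (S.image (zres I)) ≤ adaptedSpan R (insert a I) S := by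
  refine Submodule.span_mono (Set.image_mono ?_)
  rw [Ada_insert hI]
  exact_mod_cast Finset.subset_union_left

theorem coord_mul_mem_adaptedSpan (hI : ∀ i ∈ I, i < a) {q : (ℕ → Fin 2) → R}
    (hq : q ∈ adaptedSpan R I (doublyExtended I S)) :
    (fun σ => ((σ a : ℕ) : R) * q σ) ∈ adaptedSpan R (insert a I) S := by
  classical
  suffices adaptedSpan R I (doublyExtended I S) ≤ (adaptedSpan R (insert a I) S).comap
      (LinearMap.mulLeft R fun σ => ((σ a : ℕ) : R)) from this hq
  refine Submodule.span_le.2 ?_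
  rintro _ ⟨J, hJ, rfl⟩
  refine Submodule.subset_span ⟨insert a J, ?_, ?_⟩
  · rw [Ada_insert hI]
    exact Finset.mem_union_right _ (Finset.mem_image_of_mem _ hJ)
  · have haJ : a ∉ J := fun ha => (hI a (subset_of_mem_Ada hJ ha)).false
    exact funext fun σ => Finset.prod_insert haJ

end Monomials

section Invertibility

variable {R : Type*} [CommRing R] {I : Finset ℕ} {S : Finset (ℕ → Fin 2)}

theorem exists_mem_adaptedSpan_eqOn (hS : ∀ σ ∈ S, ∀ j ∉ I, σ j = 0) (f : (ℕ → Fin 2) → R) :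
    ∃ p ∈ adaptedSpan R I S, Set.EqOn p f S := by
  classical
  induction I using Finset.induction_on_max generalizing S f with
  | empty =>
    have eq_zero_of_mem : ∀ σ ∈ S, σ = 0 := fun σ hσ => funext fun j => hS σ hσ j (by simp)
    rcases S.eq_empty_or_nonempty with rfl | hne
    · exact ⟨0, Submodule.zero_mem _, by simp⟩
    · have one_mem : conditionMonomial R ∅ ∈ adaptedSpan R ∅ S :=
        Submodule.subset_span ⟨∅, by simp [Ada_empty, hne.ne_empty], rfl⟩
      refine ⟨f 0 • conditionMonomial R ∅, Submodule.smul_mem _ _ one_mem, fun σ hσ => ?_⟩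
      simp [conditionMonomial, eq_zero_of_mem σ hσ]
  | insert a I hI ih =>
    obtain ⟨q, hq, hqf⟩ :=
      ih eq_zero_of_mem_doublyExtended fun ξ => f (Function.update ξ a 1) - f ξ
    obtain ⟨g, hg⟩ := exists_eq_apply_zres_add_coord_mul (fun ha => (hI a ha).false) hS hqf
    obtain ⟨p, hp, hpg⟩ := ih (S := S.image (zres I)) eq_zero_of_mem_image_zres g
    refine ⟨p + fun σ => ((σ a : ℕ) : R) * q σ, Submodule.add_mem _
      (adaptedSpan_image_zres_le hI hp) (coord_mul_mem_adaptedSpan hI hq), fun σ hσ => ?_⟩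
    rw [hg σ hσ, ← hpg (Finset.mem_image_of_mem _ hσ), apply_zres_of_mem_adaptedSpan hp,
      apply_zres_of_mem_adaptedSpan hq]
    rfl

variable (R)

open Classical in
theorem exists_mul_conditionMatrix_Ada_eq_one (hS : ∀ σ ∈ S, ∀ j ∉ I, σ j = 0) :
    ∃ N : Matrix { σ // σ ∈ S } { J // J ∈ Ada I S } R,
      N * conditionMatrix R (Ada I S) S = 1 := by
  have exists_row (σ : { σ // σ ∈ S }) : ∃ c : { J // J ∈ Ada I S } → R,
      ∀ τ ∈ S, ∑ J, c J * conditionMonomial R J.1 τ = if σ.1 = τ then 1 else 0 := by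
    obtain ⟨p, hp, hpS⟩ := exists_mem_adaptedSpan_eqOn hS fun τ => if σ.1 = τ then (1 : R) else 0
    obtain ⟨c, rfl⟩ := (Submodule.mem_span_image_finset_iff_exists_fun R).1 hp
    exact ⟨c, fun τ hτ => by simpa using hpS hτ⟩
  choose N hN using exists_row
  refine ⟨Matrix.of N, Matrix.ext fun σ τ => (hN σ τ.1 τ.2).trans ?_⟩
  simp only [Matrix.one_apply, Subtype.ext_iff]

theorem card_Ada (hS : ∀ σ ∈ S, ∀ j ∉ I, σ j = 0) : (Ada I S).card = S.card := by
  classical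
  obtain ⟨N, hN⟩ := exists_mul_conditionMatrix_Ada_eq_one ℚ hS
  refine (card_Ada_le I S).antisymm ?_
  calc S.card = (N * conditionMatrix ℚ (Ada I S) S).rank := by
        rw [hN, Matrix.rank_one, Fintype.card_coe]
    _ ≤ (conditionMatrix ℚ (Ada I S) S).rank := Matrix.rank_mul_le_right _ _
    _ ≤ (Ada I S).card := by
        simpa using Matrix.rank_le_card_height (conditionMatrix ℚ (Ada I S) S)

end Invertibility

open Classical in
theorem mat_Ada_invertible_general (R : Type*) [CommRing R] (I : Finset ℕ)
    (S : Finset (ℕ → Fin 2)) (hsupp : ∀ σ ∈ S, ∀ j ∉ I, σ j = 0) :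
    ∃ N : Matrix { σ // σ ∈ S } { J // J ∈ Ada I S } R,
      conditionMatrix R (Ada I S) S * N = 1 ∧ N * conditionMatrix R (Ada I S) S = 1 := by
  obtain ⟨N, hN⟩ := exists_mul_conditionMatrix_Ada_eq_one R hsupp
  have card_eq : Fintype.card { J // J ∈ Ada I S } = Fintype.card { σ // σ ∈ S } := by
    simpa using card_Ada hsupp
  exact ⟨N, (Matrix.mul_eq_one_comm_of_card_eq _ _ _ card_eq).2 hN, hN⟩

open Classical in
/-- Let `I ⊆ {1,…,s}` and `Σ` a finite set of zero-nonzero conditions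
on `I`. The square matrix `Mat(Ada(Σ), Σ)`, with rows indexed by `Ada(Σ)`, columns
indexed by `Σ`, and `(J, σ)` entry `σ^J = ∏_{i ∈ J} σ(i)`, is invertible over `ℚ`:
it has a two-sided inverse. -/
theorem mat_Ada_invertible (s : ℕ) (I : Finset ℕ) (hI : I ⊆ Finset.Icc 1 s)
    (S : Finset (ℕ → Fin 2)) (hsupp : ∀ σ ∈ S, ∀ j ∉ I, σ j = 0) :
    ∃ N : Matrix { σ // σ ∈ S } { J // J ∈ Ada I S } ℚ,
      (Matrix.of fun (J : { J // J ∈ Ada I S }) (σ : { σ // σ ∈ S }) =>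
          ∏ i ∈ J.1, ((σ.1 i : ℕ) : ℚ)) * N = 1 ∧
      N * (Matrix.of fun (J : { J // J ∈ Ada I S }) (σ : { σ // σ ∈ S }) =>
          ∏ i ∈ J.1, ((σ.1 i : ℕ) : ℚ)) = 1 :=
  mat_Ada_invertible_general ℚ I S hsupp
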